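/- arXiv:1609.00617 — 2 statements merged into one kernel-verified Lean document; each statement's English description precedes it below -/
import Mathlib

section
/- Let ω>0, p∈(1,2) be real constants and let g:(0,∞)→ℝ be twice continuously differentiable with g''(d)≥0 for all d>0. Let 0<a<b≤1 and let r:(a,b)→ℝ be twice differentiable with r(R)>0 and 0<r'(R)<r(R)/R for all R∈(a,b). If R ↦ R·Φ,1(r'(R), r(R)/R) is differentiable on (a,b) with derivative Φ,2(r'(R), r(R)/R) (the radial Euler–Lagrange equation), then r''(R)>0 for all R∈(a,b); that is, the radially symmetric cavitation solution is strictly convex. -/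
/-!
Write `x = r'(R)`, `y = r(R)/R` and `S = x² + y²`. Since `y' = (x - y)/R`, expanding the radial
Euler–Lagrange equation by the chain rule gives `R Φ,11 r'' = Φ,2 - Φ,1 + (y - x) Φ,12`. The terms
in `g'(xy)` cancel, which leaves

  `R Φ,11 r'' = (y - x) (ω p S^{p/2-2} (x² + y² - (2 - p) x y) + x y g''(x y))`,
  `Φ,11 = ω p S^{p/2-2} ((p - 1) x² + y²) + y² g''(x y)`.

For `1 < p < 2`, `0 < x < y` and `g'' ≥ 0`, both the right-hand side of the first line and `Φ,11` are
positive, so `r'' > 0`.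
-/


open Real Set

/-- The stored energy density `Φ(v₁,v₂) = ω(v₁²+v₂²)^{p/2} + g(v₁v₂)`. -/
noncomputable def Phi (ω p : ℝ) (g : ℝ → ℝ) (v1 v2 : ℝ) : ℝ :=
  ω * (v1 ^ 2 + v2 ^ 2) ^ (p / 2) + g (v1 * v2)

/-- First partial derivative `Φ,1`. -/
noncomputable def Phi1 (ω p : ℝ) (g : ℝ → ℝ) (v1 v2 : ℝ) : ℝ :=
  deriv (fun t => Phi ω p g t v2) v1

/-- First partial derivative `Φ,2`. -/
noncomputable def Phi2 (ω p : ℝ) (g : ℝ → ℝ) (v1 v2 : ℝ) : ℝ :=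
  deriv (fun t => Phi ω p g v1 t) v2

lemma Phi_swap (ω p : ℝ) (g : ℝ → ℝ) (x y : ℝ) : Phi ω p g x y = Phi ω p g y x := by
  unfold Phi
  rw [add_comm (x ^ 2), mul_comm x y]

lemma Phi1_eq (ω p : ℝ) (g : ℝ → ℝ) (x y : ℝ) (hx : 0 < x) (hy : 0 < y)
    (hg : DifferentiableAt ℝ g (x * y)) :
    Phi1 ω p g x y = ω * p * x * (x ^ 2 + y ^ 2) ^ (p / 2 - 1) + deriv g (x * y) * y := by
  have h1 : HasDerivAt (fun t : ℝ => t ^ 2 + y ^ 2) (2 * x) x := by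
    simpa using (hasDerivAt_pow 2 x).add_const (y ^ 2)
  have h2 := (h1.rpow_const (p := p / 2) (Or.inl (by positivity))).const_mul ω
  have h3 : HasDerivAt (fun t : ℝ => t * y) y x := by
    simpa using (hasDerivAt_id x).mul_const y
  have h4 : HasDerivAt (fun t : ℝ => g (t * y)) (deriv g (x * y) * y) x :=
    HasDerivAt.comp x (h₂ := g) hg.hasDerivAt h3
  unfold Phi1 Phi
  rw [(h2.fun_add h4).deriv]
  ring

lemma Phi2_eq (ω p : ℝ) (g : ℝ → ℝ) (x y : ℝ) (hx : 0 < x) (hy : 0 < y)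
    (hg : DifferentiableAt ℝ g (x * y)) :
    Phi2 ω p g x y = ω * p * y * (x ^ 2 + y ^ 2) ^ (p / 2 - 1) + deriv g (x * y) * x := by
  have h : Phi2 ω p g x y = Phi1 ω p g y x := by
    unfold Phi2 Phi1
    simp only [Phi_swap ω p g x]
  rw [h, Phi1_eq ω p g y x hy hx (by rwa [mul_comm]), add_comm (y ^ 2), mul_comm y x]

theorem stmt3 (ω p : ℝ) (hω : 0 < ω) (hp1 : 1 < p) (hp2 : p < 2)
    (g : ℝ → ℝ) (hg : ContDiffOn ℝ 2 g (Set.Ioi 0))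
    (hg'' : ∀ d : ℝ, 0 < d → 0 ≤ deriv (deriv g) d)
    (a b : ℝ) (ha : 0 < a) (hab : a < b) (hb : b ≤ 1)
    (r : ℝ → ℝ)
    (hr : ∀ R ∈ Set.Ioo a b, DifferentiableAt ℝ r R)
    (hr' : ∀ R ∈ Set.Ioo a b, DifferentiableAt ℝ (deriv r) R)
    (hrpos : ∀ R ∈ Set.Ioo a b, 0 < r R)
    (hr'pos : ∀ R ∈ Set.Ioo a b, 0 < deriv r R)
    (hr'lt : ∀ R ∈ Set.Ioo a b, deriv r R < r R / R)
    (hEL : ∀ R ∈ Set.Ioo a b,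
      HasDerivAt (fun t => t * Phi1 ω p g (deriv r t) (r t / t))
        (Phi2 ω p g (deriv r R) (r R / R)) R) :
    ∀ R ∈ Set.Ioo a b, 0 < deriv (deriv r) R := by
  have hgd : ∀ d : ℝ, 0 < d → DifferentiableAt ℝ g d := fun d hd =>
    (hg.contDiffAt (Ioi_mem_nhds hd)).differentiableAt (by norm_num)
  have hg1 : ContDiffOn ℝ 1 (deriv g) (Set.Ioi 0) :=
    hg.deriv_of_isOpen isOpen_Ioi (by norm_num)
  have hgdd : ∀ d : ℝ, 0 < d → DifferentiableAt ℝ (deriv g) d := fun d hd =>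
    (hg1.contDiffAt (Ioi_mem_nhds hd)).differentiableAt (by norm_num)
  have hypos : ∀ t ∈ Set.Ioo a b, 0 < r t / t := fun t ht =>
    div_pos (hrpos t ht) (ha.trans ht.1)
  intro R hR
  have hR0 : 0 < R := ha.trans hR.1
  have hx := hr'pos R hR
  have hy := hypos R hR
  have hxy := hr'lt R hR
  have hd : 0 < deriv r R * (r R / R) := mul_pos hx hy
  have hX : HasDerivAt (deriv r) (deriv (deriv r) R) R := (hr' R hR).hasDerivAt
  have hY : HasDerivAt (fun t => r t / t) ((deriv r R - r R / R) / R) R := by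
    refine ((hr R hR).hasDerivAt.fun_div (hasDerivAt_id' R) hR0.ne').congr_deriv ?_
    field_simp
  have hEL' : HasDerivAt (fun t => t * (ω * p * deriv r t *
      ((deriv r t) ^ 2 + (r t / t) ^ 2) ^ (p / 2 - 1)
      + deriv g (deriv r t * (r t / t)) * (r t / t)))
      (Phi2 ω p g (deriv r R) (r R / R)) R := by
    refine (hEL R hR).congr_of_eventuallyEq ?_
    filter_upwards [Ioo_mem_nhds hR.1 hR.2] with t ht
    rw [Phi1_eq ω p g _ _ (hr'pos t ht) (hypos t ht)
      (hgd _ (mul_pos (hr'pos t ht) (hypos t ht)))]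
  rw [Phi2_eq ω p g _ _ hx hy (hgd _ hd)] at hEL'
  have hS : HasDerivAt (fun t => (deriv r t) ^ 2 + (r t / t) ^ 2)
      (2 * deriv r R * deriv (deriv r) R
        + 2 * (r R / R) * ((deriv r R - r R / R) / R)) R := by
    refine ((hX.fun_pow 2).fun_add (hY.fun_pow 2)).congr_deriv ?_
    norm_num
  have hSpow := hS.rpow_const (p := p / 2 - 1) (Or.inl (by positivity))
  have hgc : HasDerivAt (fun t => deriv g (deriv r t * (r t / t))) _ R :=
    HasDerivAt.comp R (h₂ := deriv g) (hgdd _ hd).hasDerivAt (hX.fun_mul hY)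
  have key := hEL'.unique ((hasDerivAt_id' R).fun_mul
    (((hX.const_mul (ω * p)).fun_mul hSpow).fun_add (hgc.fun_mul hY)))
  have hg2 := hg'' _ hd
  generalize deriv (deriv r) R = z at *
  generalize deriv r R = x at *
  generalize r R / R = y at *
  -- Both powers of `S` are expressed through `S ^ (p / 2 - 2)`, so that `key` becomes polynomial.
  have hpw : (x ^ 2 + y ^ 2) ^ (p / 2 - 1)
      = (x ^ 2 + y ^ 2) ^ (p / 2 - 1 - 1) * (x ^ 2 + y ^ 2) := by
    rw [← Real.rpow_add_one (by positivity)]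
    congr 1
    ring
  have hT : 0 < (x ^ 2 + y ^ 2) ^ (p / 2 - 1 - 1) := by positivity
  rw [hpw] at key
  generalize (x ^ 2 + y ^ 2) ^ (p / 2 - 1 - 1) = T at *
  generalize deriv (deriv g) (x * y) = g2 at *
  generalize deriv g (x * y) = g1 at *
  have hmain : R * (ω * p * T * ((p - 1) * x ^ 2 + y ^ 2) + y ^ 2 * g2) * z
      = (y - x) * (ω * p * T * (x ^ 2 + y ^ 2 - (2 - p) * (x * y)) + x * y * g2) := by
    field_simp at key
    linear_combination -key
  have hp0 : 0 < p := by linarith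
  have hq : 0 < x ^ 2 + y ^ 2 - (2 - p) * (x * y) := by
    nlinarith [sq_pos_of_pos (sub_pos.2 hxy), mul_pos hp0 hd]
  have hpm : 0 < p - 1 := by linarith
  have hyx : 0 < y - x := by linarith
  have hrhs : 0 < R * (ω * p * T * ((p - 1) * x ^ 2 + y ^ 2) + y ^ 2 * g2) * z := by
    rw [hmain]
    positivity
  exact pos_of_mul_pos_right hrhs (by positivity)
end

section
/- Let s:(0,1]→ℝ be twice differentiable with s(t)>0, s'(t)>0 and s''(t)≥0 for all t∈(0,1], and suppose 2s(ε+τ/2) > s(ε+τ). Then the Jacobian determinants of both interpolation maps Π_A and Π_B are strictly positive at every point of the closed reference triangle T̂ if and only if: 4s½ > 3s0 + s1, and cos(π/(2N)) > max{l1, l2}, where l1 = (2s½ − √(4s½² − 2s0(s0+s1)))/(2s0) is the smaller root of 2s0z² − 4s½z + s0 + s1 = 0 (the discriminant 16s½² − 8s0(s0+s1) being positive when 4s½ > 3s0 + s1), and l2 is the unique root in the open interval (0,1) of the cubic −6s1z³ + 4s½z² + (s0+9s1)z − 8s½ = 0 (such a root exists and is unique under the stated hypotheses on s). -/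
/-!
In the coordinates `y = x₁ + x₂`, `d = x₂ - x₁` both maps have the shape
`(f₀ + a y + b y² - k (y² + d²) / 2, (p y - q) d)`, so the Jacobian determinant is
`2 ((a + (2b - k) y) (p y - q) + k p d²)` up to orientation, and the reference triangle is
`0 ≤ y ≤ 1`, `|d| ≤ y`. Monotonicity and convexity of `s` enter only through
`0 < s0 < sh < s1`, `2 sh ≤ s0 + s1` and `s1 < 2 sh`.

* For `Π_B` the coefficient of `d²` favours positivity and the factor `p y - q` has a constant
  sign, so only the linear factor matters; its value at `y = 0` always has the right sign, and
  its value at `y = 1` is `Q(c)` with `Q(z) = 2 s0 z² - 4 sh z + s0 + s1`. Positivity is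
  therefore `Q(c) < 0` (`posB_iff`). The vertex of `Q` lies beyond `1`, so this is equivalent to
  `Q(1) < 0` together with `c` exceeding the smaller root of `Q` (`quad_neg_iff`).
* For `Π_A` the value at the origin gives `α2 > 0` and the value at `(1, 0)` gives `C(c) > 0`,
  where `C` is the cubic of the statement. Conversely these two inequalities suffice
  (`posA_iff`): if `γ ≥ 0` the worst case is `d = 0`, where the linear factor is positive at both
  ends of `[0, 1]`; if `γ < 0` the worst case is `|d| = y`, where the determinant is a concave
  quadratic in `y`.
* `Q(c) < 0` already implies `α2 > 0`, and `C(c) > 0` means that `c` exceeds the root of `C`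
  in `(0, 1)`, because `C` divided by its linear factor there is a concave quadratic that is
  positive at `0` and at `1` (`cubic_factor`); the same fact makes the root unique.
-/

open Real Set

/-- The closed reference triangle `T̂`. -/
def Tref : Set (ℝ × ℝ) := {x | 0 ≤ x.1 ∧ 0 ≤ x.2 ∧ x.1 + x.2 ≤ 1}

/-- The Jacobian determinant of a map `ℝ² → ℝ²` at a point: the determinant of
its total (Fréchet) derivative there. -/
noncomputable def jacDet (f : ℝ × ℝ → ℝ × ℝ) (x : ℝ × ℝ) : ℝ :=
  LinearMap.det ((fderiv ℝ f x).toLinearMap)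

/-- The type-A iso-parametric interpolation map `Π_A`. -/
noncomputable def PiA (s0 sh s1 c σ : ℝ) (x : ℝ × ℝ) : ℝ × ℝ :=
  (s0 + (-3 * s0 - s1 * (2 * c ^ 2 - 1) + 4 * sh * c) * (x.1 + x.2)
      + 2 * (s0 + s1 - 2 * sh * c) * (x.1 + x.2) ^ 2
      - 4 * s1 * σ ^ 2 * (x.1 ^ 2 + x.2 ^ 2),
    (2 * (2 * σ * (s1 * c - sh)) * (x.1 + x.2) - 2 * σ * (s1 * c - 2 * sh))
      * (x.2 - x.1))

/-- The type-B iso-parametric interpolation map `Π_B`. -/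
noncomputable def PiB (s0 sh s1 c σ : ℝ) (x : ℝ × ℝ) : ℝ × ℝ :=
  (s1 + (-3 * s1 - s0 * (2 * c ^ 2 - 1) + 4 * sh * c) * (x.1 + x.2)
      + 2 * (s0 + s1 - 2 * sh * c) * (x.1 + x.2) ^ 2
      - 4 * s0 * σ ^ 2 * (x.1 ^ 2 + x.2 ^ 2),
    (2 * (2 * σ * (s0 * c - sh)) * (x.1 + x.2) - 2 * σ * (s0 * c - 2 * sh))
      * (x.1 - x.2))

theorem jacDet_eq {f : ℝ × ℝ → ℝ × ℝ} {x : ℝ × ℝ} {L : ℝ × ℝ →L[ℝ] ℝ × ℝ}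
    (h : HasFDerivAt f L x) :
    jacDet f x = (L (1, 0)).1 * (L (0, 1)).2 - (L (0, 1)).1 * (L (1, 0)).2 := by
  unfold jacDet
  rw [h.fderiv, ← LinearMap.det_toMatrix (Module.Basis.finTwoProd ℝ), Matrix.det_fin_two]
  simp [LinearMap.toMatrix_apply]

/-- The Jacobian determinant of the common shape of `PiA` and `PiB`. -/
theorem jacDet_shape (f0 a b k p q : ℝ) (x : ℝ × ℝ) :
    jacDet (fun x : ℝ × ℝ => (f0 + a * (x.1 + x.2) + b * (x.1 + x.2) ^ 2
      - k * (x.1 ^ 2 + x.2 ^ 2), (p * (x.1 + x.2) - q) * (x.2 - x.1))) x =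
    2 * ((a + (2 * b - k) * (x.1 + x.2)) * (p * (x.1 + x.2) - q) + k * p * (x.2 - x.1) ^ 2) := by
  have h1 : HasFDerivAt (fun x : ℝ × ℝ => x.1) (ContinuousLinearMap.fst ℝ ℝ ℝ) x :=
    hasFDerivAt_fst
  have h2 : HasFDerivAt (fun x : ℝ × ℝ => x.2) (ContinuousLinearMap.snd ℝ ℝ ℝ) x :=
    hasFDerivAt_snd
  have hy := h1.add h2
  have hf := (((hy.const_mul a).const_add f0).add ((hy.pow 2).const_mul b)).sub
    (((h1.pow 2).add (h2.pow 2)).const_mul k)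
  have hg := ((hy.const_mul p).sub_const q).mul (h2.sub h1)
  have h := hf.prodMk hg
  refine (jacDet_eq h).trans ?_
  simp
  ring

theorem jacDet_PiA (s0 sh s1 c σ : ℝ) (x : ℝ × ℝ) (h : c ^ 2 + σ ^ 2 = 1) :
    jacDet (PiA s0 sh s1 c σ) x = 4 * σ *
      (((-3 * s0 - s1 * (2 * c ^ 2 - 1) + 4 * sh * c) * (1 - (x.1 + x.2))
        + (2 * s1 * c ^ 2 - 4 * sh * c + s0 + s1) * (x.1 + x.2))
        * ((2 * sh - s1 * c) * (1 - (x.1 + x.2)) + s1 * c * (x.1 + x.2))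
        + 8 * s1 * (1 - c ^ 2) * (s1 * c - sh) * (x.2 - x.1) ^ 2) := by
  have e : σ ^ 2 = 1 - c ^ 2 := by linarith
  refine (jacDet_shape _ _ _ _ _ _ x).trans ?_
  rw [e]
  ring

theorem jacDet_PiB (s0 sh s1 c σ : ℝ) (x : ℝ × ℝ) (h : c ^ 2 + σ ^ 2 = 1) :
    jacDet (PiB s0 sh s1 c σ) x = 4 * σ *
      (((3 * s1 + s0 * (2 * c ^ 2 - 1) - 4 * sh * c) * (1 - (x.1 + x.2))
        + (-(2 * s0 * c ^ 2 - 4 * sh * c + s0 + s1)) * (x.1 + x.2))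
        * ((2 * sh - s0 * c) * (1 - (x.1 + x.2)) + s0 * c * (x.1 + x.2))
        + 8 * s0 * (1 - c ^ 2) * (sh - s0 * c) * (x.2 - x.1) ^ 2) := by
  have e : σ ^ 2 = 1 - c ^ 2 := by linarith
  have hB : PiB s0 sh s1 c σ = fun x : ℝ × ℝ =>
      (s1 + (-3 * s1 - s0 * (2 * c ^ 2 - 1) + 4 * sh * c) * (x.1 + x.2)
        + 2 * (s0 + s1 - 2 * sh * c) * (x.1 + x.2) ^ 2
        - 4 * s0 * σ ^ 2 * (x.1 ^ 2 + x.2 ^ 2),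
      (-(2 * (2 * σ * (s0 * c - sh))) * (x.1 + x.2) - -(2 * σ * (s0 * c - 2 * sh)))
        * (x.2 - x.1)) := by
    funext x
    simp only [PiB, Prod.mk.injEq, true_and]
    ring
  rw [hB]
  refine (jacDet_shape _ _ _ _ _ _ x).trans ?_
  rw [e]
  ring

theorem lerp_pos {u v y : ℝ} (hu : 0 < u) (hv : 0 < v) (hy : 0 ≤ y) (hy1 : y ≤ 1) :
    0 < u * (1 - y) + v * y := by
  rcases hy.eq_or_lt with rfl | hy
  · simpa using hu
  · nlinarith [mul_pos hv hy, mul_nonneg hu.le (sub_nonneg.2 hy1)]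

theorem posA_iff {s0 sh s1 c σ : ℝ} (h0 : 0 < s0) (h01 : s0 < sh) (h12 : sh < s1)
    (hconv : 2 * sh ≤ s0 + s1) (h2 : s1 < 2 * sh) (hc0 : 0 < c) (hc1 : c < 1) (hσ : 0 < σ)
    (h : c ^ 2 + σ ^ 2 = 1) :
    (∀ x ∈ Tref, 0 < jacDet (PiA s0 sh s1 c σ) x) ↔
      (0 < -3 * s0 - s1 * (2 * c ^ 2 - 1) + 4 * sh * c ∧
        0 < -6 * s1 * c ^ 3 + 4 * sh * c ^ 2 + (s0 + 9 * s1) * c - 8 * sh) := by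
  have hs1 : 0 < s1 := by linarith
  have hq : 0 < 2 * sh - s1 * c := by nlinarith
  have hc2 : 0 < 1 - c ^ 2 := by nlinarith
  have hP : 0 < 2 * s1 * c ^ 2 - 4 * sh * c + s0 + s1 := by
    -- the discriminant in `c` is negative since `2 sh ≤ s0 + s1 < 2 s1`
    have : 0 < 2 * s1 * (2 * s1 * c ^ 2 - 4 * sh * c + s0 + s1) := by
      nlinarith [sq_nonneg (2 * s1 * c - 2 * sh), mul_pos hs1 h0]
    exact pos_of_mul_pos_right this (by linarith)
  constructor
  · intro H
    have H0 := H (0, 0) (by simp [Tref])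
    have H1 := H (1, 0) (by simp [Tref])
    rw [jacDet_PiA _ _ _ _ _ _ h] at H0 H1
    have H0' := pos_of_mul_pos_right H0 (by positivity)
    have H1' := pos_of_mul_pos_right H1 (by positivity)
    norm_num at H0' H1'
    constructor
    · have := pos_of_mul_pos_left H0' hq.le
      linarith
    · have : 0 < s1 * (-6 * s1 * c ^ 3 + 4 * sh * c ^ 2 + (s0 + 9 * s1) * c - 8 * sh) := by
        linarith
      exact pos_of_mul_pos_right this hs1.le
  · rintro ⟨hα, hC⟩ ⟨x1, x2⟩ ⟨hx1, hx2, hx⟩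
    rw [jacDet_PiA _ _ _ _ _ _ h]
    refine mul_pos (by positivity) ?_
    simp only at hx1 hx2 hx ⊢
    obtain ⟨y, hy⟩ : ∃ y, y = x1 + x2 := ⟨_, rfl⟩
    have hd : (x2 - x1) ^ 2 ≤ y ^ 2 := by
      rw [hy]; nlinarith [mul_nonneg hx1 hx2]
    have hy0 : 0 ≤ y := by linarith
    rw [← hy] at hx ⊢
    have hlin := lerp_pos hα hP hy0 hx
    have hfac := lerp_pos hq (mul_pos hs1 hc0) hy0 hx
    rcases le_or_gt 0 (s1 * c - sh) with hγ | hγ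
    · have : 0 ≤ 8 * s1 * (1 - c ^ 2) * (s1 * c - sh) * (x2 - x1) ^ 2 := by positivity
      nlinarith [mul_pos hlin hfac]
    · have hk : 8 * s1 * (1 - c ^ 2) * (s1 * c - sh) * y ^ 2
          ≤ 8 * s1 * (1 - c ^ 2) * (s1 * c - sh) * (x2 - x1) ^ 2 := by
        apply mul_le_mul_of_nonpos_left hd
        exact mul_nonpos_of_nonneg_of_nonpos (by positivity) hγ.le
      have hα1 : 0 < s0 + s1 - 2 * sh * c := by nlinarith
      have hbd := lerp_pos (mul_pos hα hq) (mul_pos hs1 hC) hy0 hx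
      -- `y (1 - y)` times minus the leading coefficient is the gap between the quadratic and
      -- its chord on `[0, 1]`
      have hcv : 0 ≤ 8 * (sh - s1 * c) * (s0 + s1 - 2 * sh * c) * (y * (1 - y)) :=
        mul_nonneg (mul_nonneg (by linarith) hα1.le) (mul_nonneg hy0 (by linarith))
      nlinarith [hbd, hcv, hk]

theorem posB_iff {s0 sh s1 c σ : ℝ} (h0 : 0 < s0) (h01 : s0 < sh) (h12 : sh < s1)
    (hconv : 2 * sh ≤ s0 + s1) (hc0 : 0 < c) (hc1 : c < 1) (hσ : 0 < σ)
    (h : c ^ 2 + σ ^ 2 = 1) :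
    (∀ x ∈ Tref, 0 < jacDet (PiB s0 sh s1 c σ) x) ↔
      2 * s0 * c ^ 2 - 4 * sh * c + s0 + s1 < 0 := by
  have hc2 : 0 < 1 - c ^ 2 := by nlinarith
  have hγ : 0 < sh - s0 * c := by nlinarith
  have hq : 0 < 2 * sh - s0 * c := by linarith
  constructor
  · intro H
    have H1 := H (1 / 2, 1 / 2) (by norm_num [Tref])
    rw [jacDet_PiB _ _ _ _ _ _ h] at H1
    have H1' := pos_of_mul_pos_right H1 (by positivity)
    norm_num at H1'
    have := pos_of_mul_pos_left (b := s0 * c) (a := 4 * sh * c - (2 * s0 * c ^ 2 + s0 + s1))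
      (by linarith) (by positivity)
    linarith
  · rintro hQ ⟨x1, x2⟩ ⟨hx1, hx2, hx⟩
    rw [jacDet_PiB _ _ _ _ _ _ h]
    refine mul_pos (by positivity) ?_
    simp only at hx1 hx2 hx ⊢
    have hα : 0 < 3 * s1 + s0 * (2 * c ^ 2 - 1) - 4 * sh * c := by
      nlinarith [mul_le_mul_of_nonneg_right hconv hc0.le, mul_nonneg h0.le (sq_nonneg (c - 1)),
        mul_pos (sub_pos.2 (h01.trans h12)) (by linarith : 0 < 3 - 2 * c)]
    have hlin := lerp_pos hα (neg_pos.2 hQ) (add_nonneg hx1 hx2) hx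
    have hfac := lerp_pos hq (mul_pos h0 hc0) (add_nonneg hx1 hx2) hx
    have := mul_pos hlin hfac
    positivity

theorem quad_neg_iff {s0 sh s1 c : ℝ} (h0 : 0 < s0) (h01 : s0 < sh) (hc1 : c < 1) :
    2 * s0 * c ^ 2 - 4 * sh * c + s0 + s1 < 0 ↔
      (3 * s0 + s1 < 4 * sh ∧
        (2 * sh - Real.sqrt (4 * sh ^ 2 - 2 * s0 * (s0 + s1))) / (2 * s0) < c) := by
  rw [div_lt_iff₀ (by positivity)]
  have hpos : 0 < 2 * sh - c * (2 * s0) := by nlinarith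
  -- completing the square in `Q(c)`
  have key : 2 * s0 * (2 * s0 * c ^ 2 - 4 * sh * c + s0 + s1) =
      (2 * sh - c * (2 * s0)) ^ 2 - (4 * sh ^ 2 - 2 * s0 * (s0 + s1)) := by ring
  have hsq : 2 * s0 * c ^ 2 - 4 * sh * c + s0 + s1 < 0 ↔
      (2 * sh - Real.sqrt (4 * sh ^ 2 - 2 * s0 * (s0 + s1))) < c * (2 * s0) := by
    rw [sub_lt_comm, Real.lt_sqrt hpos.le]
    constructor
    · intro hQ
      nlinarith
    · intro hQ
      by_contra hn
      nlinarith [mul_nonneg h0.le (not_lt.1 hn)]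
  rw [hsq]
  refine ⟨fun hQ => ⟨?_, hQ⟩, fun hQ => hQ.2⟩
  -- `Q(1) - Q(c) = (1 - c) (2 s0 (1 + c) - 4 sh) < 0`
  have := hsq.2 hQ
  nlinarith [mul_pos (sub_pos.2 hc1) (by nlinarith : 0 < 4 * sh - 2 * s0 * (1 + c))]

/-- On `(0, 1)` the cubic has the sign of `z - a`, for any of its roots `a` in `(0, 1)`. -/
theorem cubic_factor {s0 sh s1 a z : ℝ} (hsh : 0 < sh) (hs1 : 0 < s1)
    (h1 : 4 * sh < s0 + 3 * s1) (ha : a ∈ Set.Ioo (0 : ℝ) 1)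
    (hroot : -6 * s1 * a ^ 3 + 4 * sh * a ^ 2 + (s0 + 9 * s1) * a - 8 * sh = 0)
    (hz : z ∈ Set.Ioo (0 : ℝ) 1) :
    ∃ q, 0 < q ∧
      -6 * s1 * z ^ 3 + 4 * sh * z ^ 2 + (s0 + 9 * s1) * z - 8 * sh = (z - a) * q := by
  obtain ⟨ha0, ha1⟩ := ha
  obtain ⟨hz0, hz1⟩ := hz
  have hq0 : 0 < s0 + 9 * s1 + 4 * sh * a - 6 * s1 * a ^ 2 := by
    refine pos_of_mul_pos_right (a := a) ?_ ha0.le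
    nlinarith
  have hq1 : 0 < -6 * s1 + (4 * sh - 6 * s1 * a) +
      (s0 + 9 * s1 + 4 * sh * a - 6 * s1 * a ^ 2) := by
    refine pos_of_mul_pos_right (a := 1 - a) ?_ (by linarith)
    nlinarith
  refine ⟨-6 * s1 * z ^ 2 + (4 * sh - 6 * s1 * a) * z +
    (s0 + 9 * s1 + 4 * sh * a - 6 * s1 * a ^ 2), ?_, ?_⟩
  · have := lerp_pos hq0 hq1 hz0.le hz1.le
    nlinarith [mul_pos hs1 (mul_pos hz0 (sub_pos.2 hz1))]
  · linear_combination hroot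

theorem cubic_existsUnique {s0 sh s1 : ℝ} (hsh : 0 < sh) (hs1 : 0 < s1)
    (h1 : 4 * sh < s0 + 3 * s1) :
    ∃! z : ℝ, z ∈ Set.Ioo (0 : ℝ) 1 ∧
      -6 * s1 * z ^ 3 + 4 * sh * z ^ 2 + (s0 + 9 * s1) * z - 8 * sh = 0 := by
  have hcont : ContinuousOn (fun z : ℝ =>
      -6 * s1 * z ^ 3 + 4 * sh * z ^ 2 + (s0 + 9 * s1) * z - 8 * sh) (Set.Icc 0 1) := by
    fun_prop
  obtain ⟨a, ha, hroot⟩ := intermediate_value_Ioo (zero_le_one' ℝ) hcont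
    (show (0 : ℝ) ∈ _ from ⟨by norm_num; exact hsh, by norm_num; linarith⟩)
  refine ⟨a, ⟨ha, hroot⟩, ?_⟩
  rintro b ⟨hb, hb0⟩
  obtain ⟨q, hq, e⟩ := cubic_factor hsh hs1 h1 ha hroot hb
  rw [hb0] at e
  rcases mul_eq_zero.1 e.symm with h | h
  · linarith
  · exact absurd h hq.ne'

theorem stmt9 (ε τ : ℝ) (hε : 0 < ε) (hτ : 0 < τ) (hετ : ε + τ ≤ 1)
    (N : ℕ) (hN : 2 ≤ N)
    (s s' s'' : ℝ → ℝ)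
    (hds : ∀ t ∈ Set.Ioc (0 : ℝ) 1, HasDerivWithinAt s (s' t) (Set.Ioc 0 1) t)
    (hds' : ∀ t ∈ Set.Ioc (0 : ℝ) 1, HasDerivWithinAt s' (s'' t) (Set.Ioc 0 1) t)
    (hs : ∀ t ∈ Set.Ioc (0 : ℝ) 1, 0 < s t)
    (hs' : ∀ t ∈ Set.Ioc (0 : ℝ) 1, 0 < s' t)
    (hs'' : ∀ t ∈ Set.Ioc (0 : ℝ) 1, 0 ≤ s'' t)
    (h2 : s (ε + τ) < 2 * s (ε + τ / 2))
    (s0 sh s1 c σ : ℝ)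
    (hs0 : s0 = s ε) (hsh : sh = s (ε + τ / 2)) (hs1 : s1 = s (ε + τ))
    (hc : c = Real.cos (Real.pi / (2 * (N : ℝ))))
    (hσ : σ = Real.sin (Real.pi / (2 * (N : ℝ)))) :
    (∃! z : ℝ, z ∈ Set.Ioo (0 : ℝ) 1 ∧
        -6 * s1 * z ^ 3 + 4 * sh * z ^ 2 + (s0 + 9 * s1) * z - 8 * sh = 0) ∧
    ∀ l2 ∈ Set.Ioo (0 : ℝ) 1,
      -6 * s1 * l2 ^ 3 + 4 * sh * l2 ^ 2 + (s0 + 9 * s1) * l2 - 8 * sh = 0 →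
      ((∀ x ∈ Tref, 0 < jacDet (PiA s0 sh s1 c σ) x ∧
          0 < jacDet (PiB s0 sh s1 c σ) x) ↔
        (3 * s0 + s1 < 4 * sh ∧
          max ((2 * sh - Real.sqrt (4 * sh ^ 2 - 2 * s0 * (s0 + s1))) / (2 * s0))
            l2 < c)) := by
  have hε1 : ε ∈ Set.Ioc (0 : ℝ) 1 := ⟨hε, by linarith⟩
  have hεh : ε + τ / 2 ∈ Set.Ioc (0 : ℝ) 1 := ⟨by linarith, by linarith⟩
  have hετ1 : ε + τ ∈ Set.Ioc (0 : ℝ) 1 := ⟨by linarith, hετ⟩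
  have hcont : ContinuousOn s (Set.Ioc 0 1) := fun t ht => (hds t ht).continuousWithinAt
  have hsub : interior (Set.Ioc (0 : ℝ) 1) ⊆ Set.Ioc 0 1 := interior_subset
  have hmono : StrictMonoOn s (Set.Ioc 0 1) :=
    strictMonoOn_of_hasDerivWithinAt_pos (convex_Ioc 0 1) hcont
      (fun t ht => (hds t (hsub ht)).mono hsub) (fun t ht => hs' t (hsub ht))
  have hcvx : ConvexOn ℝ (Set.Ioc 0 1) s :=
    convexOn_of_hasDerivWithinAt2_nonneg (convex_Ioc 0 1) hcont
      (fun t ht => (hds t (hsub ht)).mono hsub) (fun t ht => (hds' t (hsub ht)).mono hsub)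
      (fun t ht => hs'' t (hsub ht))
  have h0 : 0 < s0 := hs0 ▸ hs ε hε1
  have h01 : s0 < sh := by rw [hs0, hsh]; exact hmono hε1 hεh (by linarith)
  have h12 : sh < s1 := by rw [hs1, hsh]; exact hmono hεh hετ1 (by linarith)
  have hconv : 2 * sh ≤ s0 + s1 := by
    have := hcvx.2 hε1 hετ1 (by norm_num : (0 : ℝ) ≤ 1 / 2) (by norm_num : (0 : ℝ) ≤ 1 / 2)
      (by norm_num)
    simp only [smul_eq_mul] at this
    rw [show 1 / 2 * ε + 1 / 2 * (ε + τ) = ε + τ / 2 by ring, ← hs0, ← hsh, ← hs1] at this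
    linarith
  rw [← hs1, ← hsh] at h2
  have hN' : (2 : ℝ) ≤ N := by exact_mod_cast hN
  have hang0 : 0 < Real.pi / (2 * (N : ℝ)) := by positivity
  have hang1 : Real.pi / (2 * (N : ℝ)) < Real.pi / 2 :=
    div_lt_div_of_pos_left Real.pi_pos (by norm_num) (by linarith)
  have hσ0 : 0 < σ := hσ ▸ Real.sin_pos_of_pos_of_lt_pi hang0 (by linarith [Real.pi_pos])
  have hc0 : 0 < c := hc ▸ Real.cos_pos_of_mem_Ioo ⟨by linarith [Real.pi_pos], hang1⟩
  have hcσ : c ^ 2 + σ ^ 2 = 1 := by rw [hc, hσ]; exact Real.cos_sq_add_sin_sq _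
  have hc1 : c < 1 := by nlinarith
  have hsh0 : 0 < sh := h0.trans h01
  have hs10 : 0 < s1 := hsh0.trans h12
  have h43 : 4 * sh < s0 + 3 * s1 := by linarith
  refine ⟨cubic_existsUnique hsh0 hs10 h43, fun l2 hl2 hroot => ?_⟩
  have hcub : 0 < -6 * s1 * c ^ 3 + 4 * sh * c ^ 2 + (s0 + 9 * s1) * c - 8 * sh ↔ l2 < c := by
    obtain ⟨q, hq, e⟩ := cubic_factor hsh0 hs10 h43 hl2 hroot ⟨hc0, hc1⟩
    rw [e, mul_pos_iff_of_pos_right hq, sub_pos]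
  -- `α2 > 0` follows from `Q(c) < 0`: the two differ by `2 (s1 - s0) (1 - c²)`
  have hα : 2 * s0 * c ^ 2 - 4 * sh * c + s0 + s1 < 0 →
      0 < -3 * s0 - s1 * (2 * c ^ 2 - 1) + 4 * sh * c := by
    intro hQ
    nlinarith [mul_pos (sub_pos.2 (h01.trans h12)) (by nlinarith : 0 < 1 - c ^ 2)]
  simp only [forall_and]
  rw [posA_iff h0 h01 h12 hconv h2 hc0 hc1 hσ0 hcσ, posB_iff h0 h01 h12 hconv hc0 hc1 hσ0 hcσ,
    hcub, max_lt_iff, ← and_assoc (a := 3 * s0 + s1 < 4 * sh), ← quad_neg_iff h0 h01 hc1]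
  tauto
end
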